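/- arXiv:1309.2513 — 2 statements merged into one kernel-verified Lean document; each statement's English description precedes it below -/
import Mathlib

section
/- (Generalized Stone–von Neumann theorem.) Suppose (H⁺, H⁻) is a dual pair of graded connected Hopf algebras over k. Let V be a k-module equipped with k-algebra homomorphisms π : H⁺ → End_k(V) and τ : H⁻ → End_k(V) satisfying the Heisenberg-double relation τ(x) ∘ π(a) = Σ_{(x)} π(ρ*_{x_(1)}(a)) ∘ τ(x_(2)) for all x ∈ H⁻ and a ∈ H⁺. Suppose v₀ ∈ V is a lowest weight vacuum vector, i.e.: τ(x)·v₀ = ε(x)·v₀ for all x ∈ H⁻; the map k → V, c ↦ c·v₀, is injective; and V is spanned over k by {π(a)·v₀ : a ∈ H⁺}. Then the map H⁺ → V, a ↦ π(a)·v₀, is a k-module isomorphism. -/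
open scoped TensorProduct

/-- A Hopf pairing between bialgebras `Hm` (= `H⁻`) and `Hp` (= `H⁺`) over a commutative
ring `k`: a bilinear map `p : Hm →ₗ Hp →ₗ k` satisfying
`⟨xy, a⟩ = Σ_{(a)} ⟨x, a₍₁₎⟩⟨y, a₍₂₎⟩`, `⟨x, ab⟩ = Σ_{(x)} ⟨x₍₁₎, a⟩⟨x₍₂₎, b⟩`,
`⟨1, a⟩ = ε(a)` and `⟨x, 1⟩ = ε(x)`. -/
structure IsHopfPairing (k : Type*) [CommRing k] (Hm Hp : Type*) [Ring Hm] [Ring Hp]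
    [Bialgebra k Hm] [Bialgebra k Hp]
    (p : Hm →ₗ[k] Hp →ₗ[k] k) : Prop where
  mul_left : ∀ (x y : Hm) (a : Hp), p (x * y) a =
    TensorProduct.lift ((LinearMap.mul k k).compl₁₂ (p x) (p y)) (Coalgebra.comul (R := k) a)
  mul_right : ∀ (x : Hm) (a b : Hp), p x (a * b) =
    TensorProduct.lift ((LinearMap.mul k k).compl₁₂ (p.flip a) (p.flip b))
      (Coalgebra.comul (R := k) x)
  one_left : ∀ a : Hp, p 1 a = Coalgebra.counit (R := k) a
  one_right : ∀ x : Hm, p x 1 = Coalgebra.counit (R := k) x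

/-- The left-regular action operator `ρ*_x : H⁺ → H⁺`, `ρ*_x(a) = Σ_{(a)} ⟨x, a₍₂₎⟩ a₍₁₎`. -/
noncomputable def rhoStar {k : Type*} [CommRing k] {Hm Hp : Type*} [Ring Hm] [Ring Hp]
    [Bialgebra k Hm] [Bialgebra k Hp]
    (p : Hm →ₗ[k] Hp →ₗ[k] k) (x : Hm) : Hp →ₗ[k] Hp :=
  (TensorProduct.lift (((LinearMap.lsmul k Hp).comp (p x)).flip)).comp
    (Coalgebra.comul (R := k))


/-- A graded connected Hopf algebra structure on a Hopf algebra `H` over `k`: a direct sum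
decomposition `H = ⊕ₙ Hₙ` into finitely generated free `k`-submodules with
`Hⱼ·Hₗ ⊆ H_{j+ℓ}`, `Δ(Hₙ) ⊆ ⊕_{j=0}^n Hⱼ ⊗ H_{n−j}`, `H₀ = k·1` and `ε(Hₙ) = 0` for `n > 0`. -/
structure GradedConnected (k : Type*) [CommRing k] (H : Type*) [Ring H] [HopfAlgebra k H]
    (ℬ : ℕ → Submodule k H) : Prop where
  internal : DirectSum.IsInternal ℬ
  fg : ∀ n, (ℬ n).FG
  free : ∀ n, Module.Free k (ℬ n)
  mul_mem : ∀ {m n : ℕ} {a b : H}, a ∈ ℬ m → b ∈ ℬ n → a * b ∈ ℬ (m + n)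
  comul_mem : ∀ (n : ℕ), ∀ a ∈ ℬ n, Coalgebra.comul (R := k) a ∈
    ⨆ j ∈ Finset.range (n + 1),
      LinearMap.range (TensorProduct.map (ℬ j).subtype (ℬ (n - j)).subtype)
  zero_eq : ℬ 0 = 1
  counit_eq_zero : ∀ n, 0 < n → ∀ a ∈ ℬ n, Coalgebra.counit (R := k) a = 0

/-- A dual pair `(H⁺, H⁻)` of graded connected Hopf algebras: a Hopf pairing
`⟨·,·⟩ : H⁻ × H⁺ → k` such that `⟨H⁻ₘ, H⁺ₙ⟩ = 0` for `m ≠ n` and the restriction of the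
pairing to `H⁻ₙ × H⁺ₙ` is a perfect pairing for every `n`. -/
structure IsDualPair (k : Type*) [CommRing k] (Hm Hp : Type*) [Ring Hm] [Ring Hp]
    [HopfAlgebra k Hm] [HopfAlgebra k Hp]
    (ℬm : ℕ → Submodule k Hm) (ℬp : ℕ → Submodule k Hp)
    (p : Hm →ₗ[k] Hp →ₗ[k] k) : Prop where
  gradedM : GradedConnected k Hm ℬm
  gradedP : GradedConnected k Hp ℬp
  pairing : IsHopfPairing k Hm Hp p
  orth : ∀ {m n : ℕ}, m ≠ n → ∀ x ∈ ℬm m, ∀ a ∈ ℬp n, p x a = 0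
  perfect : ∀ n, Function.Bijective ((p.domRestrict (ℬm n)).compl₂ (ℬp n).subtype)

/-- Counit axiom for `rhoStar`: `ρ*_x(a) = ⟨x,a⟩·1` for homogeneous `a` of degree at most `deg x`. -/
theorem rhoStar_top {k : Type*} [CommRing k] {Hm Hp : Type*} [Ring Hm] [Ring Hp]
    [HopfAlgebra k Hm] [HopfAlgebra k Hp]
    {ℬm : ℕ → Submodule k Hm} {ℬp : ℕ → Submodule k Hp}
    (p : Hm →ₗ[k] Hp →ₗ[k] k) (hD : IsDualPair k Hm Hp ℬm ℬp p)
    {m n : ℕ} (hmn : m ≤ n) {x : Hm} (hx : x ∈ ℬm n) {a : Hp} (ha : a ∈ ℬp m) :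
    rhoStar p x a = p x a • (1 : Hp) := by
  let F : Hp ⊗[k] Hp →ₗ[k] Hp :=
    TensorProduct.lift (((LinearMap.lsmul k Hp).comp (p x)).flip)
  let G : Hp ⊗[k] Hp →ₗ[k] Hp :=
    ((LinearMap.toSpanSingleton k Hp 1).comp (p x)).comp
      ((TensorProduct.lid k Hp).toLinearMap.comp
        (LinearMap.rTensor Hp (Coalgebra.counit (R := k) (A := Hp))))
  have hG : G (Coalgebra.comul (R := k) a) = p x a • (1 : Hp) := by
    simp [G, Coalgebra.rTensor_counit_comul]
  rw [← hG]
  change F _ = G _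
  have hle : (⨆ j ∈ Finset.range (m + 1),
      LinearMap.range (TensorProduct.map (ℬp j).subtype (ℬp (m - j)).subtype))
      ≤ LinearMap.eqLocus F G := by
    refine iSup₂_le fun j hj => ?_
    rintro _ ⟨t, rfl⟩
    rw [LinearMap.mem_eqLocus]
    induction t with
    | zero => simp
    | add s t hs ht => simp only [map_add, hs, ht]
    | tmul c b =>
      obtain ⟨c, hc⟩ := c
      obtain ⟨b, hb⟩ := b
      have h1 : F (c ⊗ₜ b) = p x b • c := by simp [F]
      have h2 : G (c ⊗ₜ b) = (Coalgebra.counit (R := k) c * p x b) • (1 : Hp) := by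
        simp [G, LinearMap.toSpanSingleton_apply]
      simp only [TensorProduct.map_tmul, Submodule.subtype_apply]
      rw [h1, h2]
      rcases Nat.eq_zero_or_pos j with rfl | hj0
      · rw [hD.gradedP.zero_eq, Submodule.mem_one] at hc
        obtain ⟨r, rfl⟩ := hc
        rw [Bialgebra.counit_algebraMap, Algebra.algebraMap_eq_smul_one, smul_smul, mul_comm]
      · have : j < m + 1 := Finset.mem_range.mp hj
        rw [hD.orth (by omega : n ≠ m - j) x hx b hb]
        simp
  exact hle (hD.gradedP.comul_mem m a ha)

/-- generalized Stone–von Neumann theorem: let `(H⁺, H⁻)` be a dual pair and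
let `V` be a `k`-module with algebra homomorphisms `π : H⁺ → End(V)`, `τ : H⁻ → End(V)`
satisfying the Heisenberg-double relation
`τ(x) ∘ π(a) = Σ_{(x)} π(ρ*_{x₍₁₎}(a)) ∘ τ(x₍₂₎)`.  If `v₀ ∈ V` is a lowest weight vacuum
vector (`τ(x)v₀ = ε(x)v₀`, `c ↦ c·v₀` injective, `V` spanned by `π(H⁺)v₀`), then
`a ↦ π(a)v₀` is a `k`-module isomorphism `H⁺ ≅ V`. -/
theorem stone_von_neumann {k : Type*} [CommRing k] {Hm Hp : Type*} [Ring Hm] [Ring Hp]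
    [HopfAlgebra k Hm] [HopfAlgebra k Hp]
    {ℬm : ℕ → Submodule k Hm} {ℬp : ℕ → Submodule k Hp}
    (p : Hm →ₗ[k] Hp →ₗ[k] k) (hD : IsDualPair k Hm Hp ℬm ℬp p)
    (V : Type*) [AddCommGroup V] [Module k V]
    (π : Hp →ₐ[k] Module.End k V) (τ : Hm →ₐ[k] Module.End k V)
    (hrel : ∀ (x : Hm) (a : Hp) (N : ℕ) (x1 x2 : Fin N → Hm),
      Coalgebra.comul (R := k) x = ∑ i, x1 i ⊗ₜ[k] x2 i →
      τ x * π a = ∑ i, π (rhoStar p (x1 i) a) * τ (x2 i))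
    (v₀ : V)
    (hvac : ∀ x : Hm, τ x v₀ = Coalgebra.counit (R := k) x • v₀)
    (hinj : Function.Injective (fun c : k => c • v₀))
    (hspan : Submodule.span k (Set.range (fun a : Hp => π a v₀)) = ⊤) :
    Function.Bijective (fun a : Hp => π a v₀) := by
  classical
  let Φ : Hp →ₗ[k] V := (LinearMap.applyₗ v₀).comp π.toLinearMap
  have hΦ : ∀ a, Φ a = π a v₀ := fun a => rfl
  have hΦ1 : ∀ c : k, Φ (c • 1) = c • v₀ := by intro c; rw [map_smul, hΦ]; simp
  have key : ∀ x a, τ x (Φ a) = Φ (rhoStar p x a) := by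
    intro x a
    obtain ⟨N, x1, x2, h⟩ : ∃ (N : ℕ) (x1 x2 : Fin N → Hm),
        Coalgebra.comul (R := k) x = ∑ i, x1 i ⊗ₜ[k] x2 i := by
      obtain ⟨S, hS⟩ := TensorProduct.exists_finset (Coalgebra.comul (R := k) x)
      refine ⟨S.card, fun i => (S.equivFin.symm i).1.1, fun i => (S.equivFin.symm i).1.2, ?_⟩
      rw [hS, ← Finset.sum_coe_sort]
      exact (Equiv.sum_comp S.equivFin.symm
        (fun s : S => (s.1.1 ⊗ₜ[k] s.1.2 : Hm ⊗[k] Hm))).symm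
    have h1 := congrArg (fun f : Module.End k V => f v₀) (hrel x a N x1 x2 h)
    simp only [Module.End.mul_apply, LinearMap.sum_apply, hvac, map_smul] at h1
    rw [hΦ, h1]
    have hx : x = ∑ i, Coalgebra.counit (R := k) (x2 i) • x1 i := by
      have := congrArg (TensorProduct.rid k Hm) (Coalgebra.lTensor_counit_comul (R := k) x)
      rw [h] at this
      simpa using this.symm
    let L : Hp ⊗[k] Hp →ₗ[k] Hm →ₗ[k] Hp := LinearMap.flip
      { toFun := fun y => TensorProduct.lift (((LinearMap.lsmul k Hp).comp (p y)).flip)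
        map_add' := fun y z => by ext; simp [add_smul]
        map_smul' := fun r y => by ext; simp [mul_smul] }
    have hL : ∀ y, rhoStar p y a = L (Coalgebra.comul (R := k) a) y := fun y => rfl
    conv_rhs => rw [hL, hx]
    simp only [map_sum, map_smul]
    simp only [← hL, hΦ]
  constructor
  · have main : ∀ (N : ℕ) (f : ℕ → Hp), (∀ i, f i ∈ ℬp i) →
        Φ (∑ i ∈ Finset.range N, f i) = 0 → ∑ i ∈ Finset.range N, f i = 0 := by
      intro N f hf
      induction N with
      | zero => simp
      | succ N ih =>
        intro h0
        have hN : f N = 0 := by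
          have hp : ∀ x ∈ ℬm N, p x (f N) = 0 := by
            intro x hx
            have h1 := key x (∑ i ∈ Finset.range (N + 1), f i)
            rw [h0, map_zero, map_sum, Finset.sum_range_succ,
              Finset.sum_eq_zero, zero_add, rhoStar_top p hD le_rfl hx (hf N), hΦ1] at h1
            · exact hinj (by simpa using h1.symm)
            · intro i hi
              have hi' := Finset.mem_range.mp hi
              rw [rhoStar_top p hD hi'.le hx (hf i), hD.orth (by omega) x hx _ (hf i), zero_smul]
          have := hD.gradedP.free N
          have h2 : (⟨f N, hf N⟩ : ℬp N) = 0 := by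
            rw [← Module.forall_dual_apply_eq_zero_iff k]
            intro φ
            obtain ⟨x, rfl⟩ := (hD.perfect N).2 φ
            exact hp x.1 x.2
          exact congrArg Subtype.val h2
        rw [Finset.sum_range_succ, hN, add_zero] at h0 ⊢
        exact ih h0
    have hker : ∀ a, Φ a = 0 → a = 0 := by
      intro a ha
      have ht : a ∈ ⨆ i, ℬp i := by
        rw [hD.gradedP.internal.submodule_iSup_eq_top]; trivial
      obtain ⟨f, hf, hs⟩ := (Submodule.mem_iSup_iff_exists_finsupp _ _).mp ht
      have hs' : ∑ i ∈ Finset.range (f.support.sup id + 1), f i = a := by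
        rw [← hs]
        refine (Finset.sum_subset ?_ ?_).symm
        · intro i hi
          exact Finset.mem_range.mpr (Nat.lt_succ_of_le (Finset.le_sup (f := id) hi))
        · intro i _ hi
          simpa using hi
      rw [← hs'] at ha ⊢
      exact main _ f hf ha
    exact (injective_iff_map_eq_zero Φ).mpr hker
  · have : LinearMap.range Φ = ⊤ := by
      rw [eq_top_iff, ← hspan, Submodule.span_le]
      rintro _ ⟨a, rfl⟩
      exact ⟨a, rfl⟩
    exact LinearMap.range_eq_top.mp this
end

section
/- Assume {T_w : w ∈ S_n} is a basis of B_n, let w₀ be the longest element of S_n, and let λ : B_n → F be the F-linear functional determined by λ(T_w) = δ_{w,w₀}. Then every nonzero left ideal I of B_n contains an element b with λ(b) ≠ 0; that is, ker λ contains no nonzero left ideal of B_n, so B_n is a Frobenius algebra with trace map λ (equivalently, the bilinear form (a, b) ↦ λ(ab) on B_n is nondegenerate). -/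
open scoped TensorProduct

namespace HeckeLikeTower

variable (F : Type*) [Field F]

/-- The defining relations of the Hecke-like algebra of degree `n` over `F` with parameters
`c, d`.  The generators `T_1, …, T_{n-1}` are indexed by `Fin (n-1)`, where the index
`i : Fin (n-1)` corresponds to the generator `T_{i+1}`. -/
inductive Rel (c d : F) (n : ℕ) :
    FreeAlgebra F (Fin (n - 1)) → FreeAlgebra F (Fin (n - 1)) → Prop
  | comm (i j : Fin (n - 1)) (h : (i : ℕ) + 1 < (j : ℕ)) :
      Rel c d n (FreeAlgebra.ι F i * FreeAlgebra.ι F j)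
        (FreeAlgebra.ι F j * FreeAlgebra.ι F i)
  | braid (i j : Fin (n - 1)) (h : (j : ℕ) = (i : ℕ) + 1) :
      Rel c d n (FreeAlgebra.ι F i * FreeAlgebra.ι F j * FreeAlgebra.ι F i)
        (FreeAlgebra.ι F j * FreeAlgebra.ι F i * FreeAlgebra.ι F j)
  | quad (i : Fin (n - 1)) :
      Rel c d n (FreeAlgebra.ι F i * FreeAlgebra.ι F i)
        (c • FreeAlgebra.ι F i + algebraMap F (FreeAlgebra F (Fin (n - 1))) d)

/-- The Hecke-like algebra `B_n` of degree `n` over `F` with parameters `c, d`: the quotient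
of the free associative unital `F`-algebra on `T_1, …, T_{n-1}` by the two-sided ideal
generated by the relations. -/
abbrev B (c d : F) (n : ℕ) : Type _ := RingQuot (Rel F c d n)

/-- The generator `T_{i+1}` of the Hecke-like algebra `B_n` (for `i : Fin (n-1)`). -/
def T (c d : F) (n : ℕ) (i : Fin (n - 1)) : B F c d n :=
  RingQuot.mkAlgHom F (Rel F c d n) (FreeAlgebra.ι F i)

/-- The adjacent transposition `s_{i+1} = (i+1, i+2) ∈ S_n` (for `i : Fin (n-1)`), acting on
`Fin n` by swapping `i` and `i+1` (`0`-based). -/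
def s (n : ℕ) (i : Fin (n - 1)) : Equiv.Perm (Fin n) :=
  Equiv.swap ⟨(i : ℕ), lt_of_lt_of_le i.isLt (Nat.sub_le n 1)⟩
    ⟨(i : ℕ) + 1, by have := i.isLt; omega⟩

/-- The product in `S_n` of the adjacent transpositions along a word. -/
def wordProd (n : ℕ) (l : List (Fin (n - 1))) : Equiv.Perm (Fin n) :=
  (l.map (s n)).prod

/-- The product `T_{i_1} ⋯ T_{i_r}` in `B_n` along a word `(i_1, …, i_r)`. -/
def Tword (c d : F) (n : ℕ) (l : List (Fin (n - 1))) : B F c d n :=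
  (l.map (T F c d n)).prod

/-- `l` is a reduced word for the permutation `w ∈ S_n`: the corresponding product of
adjacent transpositions is `w`, and `l` has minimal length among all such words (its length
is then the Coxeter length `ℓ(w)`). -/
def IsReducedWord (n : ℕ) (w : Equiv.Perm (Fin n)) (l : List (Fin (n - 1))) : Prop :=
  wordProd n l = w ∧
    ∀ l' : List (Fin (n - 1)), wordProd n l' = w → l.length ≤ l'.length

/-- The Coxeter length `ℓ(w)` of `w ∈ S_n` with respect to the adjacent transpositions. -/
noncomputable def len (n : ℕ) (w : Equiv.Perm (Fin n)) : ℕ :=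
  sInf {r | ∃ l : List (Fin (n - 1)), wordProd n l = w ∧ l.length = r}

end HeckeLikeTower

open HeckeLikeTower

namespace HeckeLikeTower

/-- Ascent of `w⁻¹` at `i`. -/
def Asc (n : ℕ) (i : Fin (n - 1)) (w : Equiv.Perm (Fin n)) : Prop :=
  w⁻¹ ⟨(i : ℕ), lt_of_lt_of_le i.isLt (Nat.sub_le n 1)⟩ <
    w⁻¹ ⟨(i : ℕ) + 1, by have := i.isLt; omega⟩

lemma s_mul_self (n : ℕ) (i : Fin (n - 1)) : s n i * s n i = 1 := Equiv.swap_mul_self _ _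

lemma s_mul_cancel (n : ℕ) (i : Fin (n - 1)) (w : Equiv.Perm (Fin n)) :
    s n i * (s n i * w) = w := by rw [← mul_assoc, s_mul_self, one_mul]

lemma s_inv (n : ℕ) (i : Fin (n - 1)) : (s n i)⁻¹ = s n i := Equiv.swap_inv _ _

lemma inv_apply (n : ℕ) (i : Fin (n - 1)) (w : Equiv.Perm (Fin n)) (k : Fin n) :
    (s n i * w)⁻¹ k = w⁻¹ (s n i k) := by
  rw [mul_inv_rev, s_inv, Equiv.Perm.mul_apply]

lemma s_apply_left (n : ℕ) (i : Fin (n - 1)) (h : (i : ℕ) < n) :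
    s n i ⟨i, h⟩ = ⟨(i : ℕ) + 1, by have := i.isLt; omega⟩ := Equiv.swap_apply_left _ _

lemma s_apply_right (n : ℕ) (i : Fin (n - 1)) (h : (i : ℕ) + 1 < n) :
    s n i ⟨(i : ℕ) + 1, h⟩ = ⟨(i : ℕ), by omega⟩ := Equiv.swap_apply_right _ _

lemma s_apply_other (n : ℕ) (i : Fin (n - 1)) (k : Fin n) (h : (k : ℕ) ≠ i)
    (h' : (k : ℕ) ≠ i + 1) : s n i k = k := by
  apply Equiv.swap_apply_of_ne_of_ne <;> (intro e; subst e; simp at h h')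

lemma asc_s_mul (n : ℕ) (i : Fin (n - 1)) (w : Equiv.Perm (Fin n)) :
    Asc n i (s n i * w) ↔ ¬ Asc n i w := by
  unfold Asc
  rw [inv_apply, inv_apply, s_apply_right, s_apply_left]
  refine ⟨not_lt_of_gt, fun h => lt_of_le_of_ne (not_lt.1 h) fun e => ?_⟩
  have := w⁻¹.injective e
  simp at this

/-- Exchange property for transpositions. -/
lemma exchange (n : ℕ) (l : List (Fin (n - 1))) : ∀ a b : Fin n, a < b →
    (wordProd n l)⁻¹ b < (wordProd n l)⁻¹ a →
    ∃ l' : List (Fin (n - 1)), wordProd n l' = Equiv.swap a b * wordProd n l ∧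
      l'.length < l.length := by
  induction l with
  | nil =>
    intro a b h h'
    simp [wordProd] at h'
    exact absurd h (not_lt.2 h'.le)
  | cons j l ih =>
    intro a b h h'
    have hc : wordProd n (j :: l) = s n j * wordProd n l := by simp [wordProd]
    rw [hc, inv_apply, inv_apply] at h'
    by_cases hab : (a : ℕ) = j ∧ (b : ℕ) = j + 1
    · refine ⟨l, ?_, by simp⟩
      have e : Equiv.swap a b = s n j := by
        unfold s
        congr 1
        · exact Fin.ext hab.1
        · exact Fin.ext hab.2
      rw [hc, e, s_mul_cancel]
    · have hlt : s n j a < s n j b := by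
        have hj := j.isLt
        have hv : ∀ k : Fin n, ((s n j k : Fin n) : ℕ) =
            if (k : ℕ) = j then (j : ℕ) + 1 else if (k : ℕ) = j + 1 then (j : ℕ) else k := by
          intro k
          by_cases h1 : (k : ℕ) = j
          · have : k = ⟨j, by omega⟩ := Fin.ext h1
            rw [this, s_apply_left]; simp
          · by_cases h2 : (k : ℕ) = j + 1
            · have : k = ⟨j + 1, by omega⟩ := Fin.ext h2
              rw [this, s_apply_right]; simp
            · rw [s_apply_other n j k h1 h2]; simp [h1, h2]
        rw [Fin.lt_def] at h ⊢
        rw [hv, hv]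
        split_ifs <;> omega
      obtain ⟨l', h1, h2⟩ := ih _ _ hlt h'
      refine ⟨j :: l', ?_, by simpa using h2⟩
      have : wordProd n (j :: l') = s n j * wordProd n l' := by simp [wordProd]
      rw [this, h1, hc, Equiv.swap_apply_apply, s_inv]
      simp only [mul_assoc, s_mul_cancel]

lemma len_le (n : ℕ) (l : List (Fin (n - 1))) : len n (wordProd n l) ≤ l.length :=
  Nat.sInf_le ⟨l, rfl, rfl⟩

lemma len_eq (n : ℕ) (w : Equiv.Perm (Fin n)) (l : List (Fin (n - 1)))
    (h : IsReducedWord n w l) : len n w = l.length := by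
  apply le_antisymm
  · rw [← h.1]; exact len_le n l
  · apply le_csInf
    · exact ⟨_, l, h.1, rfl⟩
    · rintro r ⟨l', h1, rfl⟩
      exact h.2 l' h1

lemma len_lt_of_asc (n : ℕ) (i : Fin (n - 1)) (w : Equiv.Perm (Fin n))
    (l : List (Fin (n - 1))) (hl : IsReducedWord n (s n i * w) l) (h : Asc n i w) :
    len n w < len n (s n i * w) := by
  rw [len_eq n _ l hl]
  obtain ⟨l', h1, h2⟩ := exchange n l ⟨(i : ℕ), by have := i.isLt; omega⟩
    ⟨(i : ℕ) + 1, by have := i.isLt; omega⟩ (by simp [Fin.lt_def]) (by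
      rw [hl.1, inv_apply, inv_apply, s_apply_left, s_apply_right]
      exact h)
  rw [hl.1] at h1
  have h3 : wordProd n l' = w := by
    rw [h1]; exact s_mul_cancel n i w
  rw [← h3]
  exact lt_of_le_of_lt (len_le n l') h2

variable (F : Type*) [Field F]

open Classical in
/-- The operator by which `T_i` acts. -/
noncomputable def L (c d : F) (n : ℕ) (i : Fin (n - 1)) :
    Module.End F (Equiv.Perm (Fin n) → F) where
  toFun f w := if Asc n i w then d * f (s n i * w) else f (s n i * w) + c * f w
  map_add' f g := by
    funext w
    simp only [Pi.add_apply]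
    split_ifs <;> ring
  map_smul' a f := by
    funext w
    simp only [Pi.smul_apply, smul_eq_mul, RingHom.id_apply]
    split_ifs <;> ring

open Classical in
lemma L_apply (c d : F) (n : ℕ) (i : Fin (n - 1)) (f : Equiv.Perm (Fin n) → F)
    (w : Equiv.Perm (Fin n)) : L F c d n i f w =
      if Asc n i w then d * f (s n i * w) else f (s n i * w) + c * f w := rfl

lemma L_pos (c d : F) (n : ℕ) (i : Fin (n - 1)) (f : Equiv.Perm (Fin n) → F)
    (w : Equiv.Perm (Fin n)) (h : Asc n i w) : L F c d n i f w = d * f (s n i * w) := by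
  rw [L_apply, if_pos h]

lemma L_neg (c d : F) (n : ℕ) (i : Fin (n - 1)) (f : Equiv.Perm (Fin n) → F)
    (w : Equiv.Perm (Fin n)) (h : ¬ Asc n i w) :
    L F c d n i f w = f (s n i * w) + c * f w := by
  rw [L_apply, if_neg h]

lemma L_quad (c d : F) (n : ℕ) (i : Fin (n - 1)) :
    L F c d n i * L F c d n i = c • L F c d n i + algebraMap F _ d := by
  refine LinearMap.ext fun f => ?_
  funext w
  by_cases h : Asc n i w <;>
  simp only [Module.End.mul_apply, L_pos, L_neg, h, not_true_eq_false, not_false_eq_true,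
    asc_s_mul, s_mul_cancel, LinearMap.add_apply,
    LinearMap.smul_apply, Pi.add_apply, Pi.smul_apply, smul_eq_mul,
    Module.algebraMap_end_apply] <;> ring

lemma s_comm (n : ℕ) (i j : Fin (n - 1)) (h : (i : ℕ) + 1 < (j : ℕ)) :
    s n i * s n j = s n j * s n i := by
  apply Equiv.Perm.Disjoint.commute
  intro k
  by_cases h1 : (k : ℕ) = i ∨ (k : ℕ) = i + 1
  · right; apply s_apply_other <;> omega
  · left; apply s_apply_other <;> omega

lemma s_braid (n : ℕ) (i j : Fin (n - 1)) (h : (j : ℕ) = (i : ℕ) + 1) :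
    s n i * (s n j * s n i) = s n j * (s n i * s n j) := by
  have hj := j.isLt
  obtain ⟨x, hx⟩ : ∃ x : Fin n, x = ⟨i, by omega⟩ := ⟨_, rfl⟩
  obtain ⟨y, hy⟩ : ∃ y : Fin n, y = ⟨i + 1, by omega⟩ := ⟨_, rfl⟩
  obtain ⟨z, hz⟩ : ∃ z : Fin n, z = ⟨i + 2, by omega⟩ := ⟨_, rfl⟩
  have ix : s n i x = y := by rw [hx, s_apply_left]; exact hy.symm
  have iy : s n i y = x := by rw [hy, s_apply_right]; exact hx.symm
  have iz : s n i z = z := by rw [hz]; apply s_apply_other <;> simp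
  have jx : s n j x = x := by rw [hx]; apply s_apply_other <;> simp <;> omega
  have jy : s n j y = z := by
    have : y = ⟨j, by omega⟩ := hy.trans (Fin.ext h.symm)
    rw [this, s_apply_left]; refine Eq.trans (Fin.ext ?_) hz.symm; simp; omega
  have jz : s n j z = y := by rw [← jy]; exact congrArg (· y) (s_mul_self n j)
  refine Equiv.ext fun k => ?_
  simp only [Equiv.Perm.mul_apply]
  by_cases h1 : k = x
  · subst h1; simp only [ix, iy, iz, jx, jy, jz]
  by_cases h2 : k = y
  · subst h2; simp only [ix, iy, iz, jx, jy, jz]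
  by_cases h3 : k = z
  · subst h3; simp only [ix, iy, iz, jx, jy, jz]
  simp only [hx, hy, hz, Fin.ext_iff] at h1 h2 h3
  have ik : s n i k = k := s_apply_other n i k h1 h2
  have jk : s n j k = k := s_apply_other n j k (by omega) (by omega)
  simp only [ik, jk]

lemma L_comm (c d : F) (n : ℕ) (i j : Fin (n - 1)) (h : (i : ℕ) + 1 < (j : ℕ)) :
    L F c d n i * L F c d n j = L F c d n j * L F c d n i := by
  refine LinearMap.ext fun f => ?_
  funext w
  have h1 : Asc n i (s n j * w) ↔ Asc n i w := by
    unfold Asc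
    rw [inv_apply, inv_apply, s_apply_other, s_apply_other] <;> simp <;> omega
  have h2 : Asc n j (s n i * w) ↔ Asc n j w := by
    unfold Asc
    rw [inv_apply, inv_apply, s_apply_other, s_apply_other] <;> simp <;> omega
  have h3 : s n j * (s n i * w) = s n i * (s n j * w) := by
    rw [← mul_assoc, ← mul_assoc, s_comm n i j h]
  by_cases hi : Asc n i w <;> by_cases hj : Asc n j w <;>
  simp only [Module.End.mul_apply, L_pos, L_neg, h1, h2, h3, hi, hj, not_false_eq_true] <;> ring

lemma L_braid (c d : F) (n : ℕ) (i j : Fin (n - 1)) (h : (j : ℕ) = (i : ℕ) + 1) :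
    L F c d n i * L F c d n j * L F c d n i = L F c d n j * L F c d n i * L F c d n j := by
  refine LinearMap.ext fun f => ?_
  funext w
  have hj := j.isLt
  have hs : ∀ w, s n i * (s n j * (s n i * w)) = s n j * (s n i * (s n j * w)) := by
    intro w
    have := congrArg (· * w) (s_braid n i j h)
    simpa only [mul_assoc] using this
  obtain ⟨x, hx⟩ : ∃ x : Fin n, x = ⟨i, by omega⟩ := ⟨_, rfl⟩
  obtain ⟨y, hy⟩ : ∃ y : Fin n, y = ⟨i + 1, by omega⟩ := ⟨_, rfl⟩
  obtain ⟨z, hz⟩ : ∃ z : Fin n, z = ⟨i + 2, by omega⟩ := ⟨_, rfl⟩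
  have ai : ∀ w, Asc n i w ↔ w⁻¹ x < w⁻¹ y := by intro w; rw [hx, hy]; rfl
  have aj : ∀ w, Asc n j w ↔ w⁻¹ y < w⁻¹ z := by
    intro w; rw [hy, hz]; unfold Asc; simp only [h]
  have ix : s n i x = y := by rw [hx, s_apply_left]; exact hy.symm
  have iy : s n i y = x := by rw [hy, s_apply_right]; exact hx.symm
  have iz : s n i z = z := by rw [hz]; apply s_apply_other <;> simp
  have jx : s n j x = x := by rw [hx]; apply s_apply_other <;> simp <;> omega
  have jy : s n j y = z := by
    have : y = ⟨j, by omega⟩ := hy.trans (Fin.ext h.symm)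
    rw [this, s_apply_left]; refine Eq.trans (Fin.ext ?_) hz.symm; simp; omega
  have jz : s n j z = y := by rw [← jy]; exact congrArg (· y) (s_mul_self n j)
  have nxy : w⁻¹ x ≠ w⁻¹ y := fun e => by
    have := w⁻¹.injective e
    simp [hx, hy] at this
  have nyz : w⁻¹ y ≠ w⁻¹ z := fun e => by
    have := w⁻¹.injective e
    simp [hz, hy] at this
  have nxz : w⁻¹ x ≠ w⁻¹ z := fun e => by
    have := w⁻¹.injective e
    simp [hx, hz] at this
  rcases lt_or_gt_of_ne nxy with h1 | h1 <;> rcases lt_or_gt_of_ne nyz with h2 | h2 <;>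
    rcases lt_or_gt_of_ne nxz with h3 | h3 <;>
    first
    | (exfalso; omega)
    | (simp only [Module.End.mul_apply, L_pos, L_neg, ai, aj, inv_apply, ix, iy, iz, jx, jy, jz,
        s_mul_cancel, hs, h1, h2, h3, not_lt_of_gt h1, not_lt_of_gt h2, not_lt_of_gt h3,
        not_false_eq_true]; try ring)

/-- The representation of `B_n`. -/
noncomputable def rho (c d : F) (n : ℕ) :
    B F c d n →ₐ[F] Module.End F (Equiv.Perm (Fin n) → F) :=
  RingQuot.liftAlgHom F ⟨FreeAlgebra.lift F (L F c d n), by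
    intro x y h
    cases h with
    | comm i j h => simpa using L_comm F c d n i j h
    | braid i j h => simpa using L_braid F c d n i j h
    | quad i => simpa using L_quad F c d n i⟩

lemma rho_T (c d : F) (n : ℕ) (i : Fin (n - 1)) : rho F c d n (T F c d n i) = L F c d n i := by
  simp [rho, T]

lemma L_single (c d : F) (n : ℕ) (i : Fin (n - 1)) (w : Equiv.Perm (Fin n)) (h : Asc n i w) :
    L F c d n i (Pi.single w 1) = Pi.single (s n i * w) 1 := by
  funext v
  have key : s n i * v = w ↔ v = s n i * w := by
    constructor
    · rintro rfl; rw [s_mul_cancel]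
    · rintro rfl; rw [s_mul_cancel]
  rw [L_apply]
  simp only [Pi.single_apply, key]
  by_cases hv : Asc n i v
  · have : v ≠ s n i * w := by
      rintro rfl
      exact (asc_s_mul n i w).1 hv h
    simp [hv, this]
  · have : v ≠ w := by rintro rfl; exact hv h
    simp [hv, this]

lemma rho_reduced (c d : F) (n : ℕ)
    (l : List (Fin (n - 1))) :
    IsReducedWord n (wordProd n l) l →
    rho F c d n (Tword F c d n l) (Pi.single 1 1) = Pi.single (wordProd n l) 1 := by
  induction l with
  | nil => intro _; simp [Tword, wordProd]
  | cons i l ih =>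
    intro h
    have hc : wordProd n (i :: l) = s n i * wordProd n l := by simp [wordProd]
    have hT : Tword F c d n (i :: l) = T F c d n i * Tword F c d n l := by simp [Tword]
    have hl : IsReducedWord n (wordProd n l) l := by
      refine ⟨rfl, fun l' h' => ?_⟩
      have := h.2 (i :: l') (by
        rw [hc, ← h']; simp [wordProd])
      simpa using this
    have ha : Asc n i (wordProd n l) := by
      by_contra hna
      have h1 := len_lt_of_asc n i (s n i * wordProd n l) l (by rwa [s_mul_cancel])
        ((asc_s_mul n i _).2 hna)
      rw [s_mul_cancel, ← hc, len_eq n _ _ h, len_eq n _ _ hl] at h1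
      simp at h1
    rw [hT, map_mul, Module.End.mul_apply, ih hl, rho_T, L_single F c d n i _ ha, hc]

lemma eq_of_no_asc (n : ℕ) (hn : 0 < n) (v w : Equiv.Perm (Fin n))
    (hv : ∀ i, ¬ Asc n i v) (hw : ∀ i, ¬ Asc n i w) : v = w := by
  obtain ⟨m, rfl⟩ : ∃ m, n = m + 1 := ⟨n - 1, by omega⟩
  have key : ∀ v : Equiv.Perm (Fin (m + 1)), (∀ i, ¬ Asc (m + 1) i v) → StrictAnti ⇑v⁻¹ := by
    intro v hv
    rw [Fin.strictAnti_iff_succ_lt]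
    intro i
    have h1 := not_lt.1 (hv i)
    refine lt_of_le_of_ne h1 fun e => ?_
    have := Fin.ext_iff.1 (v⁻¹.injective e)
    change (i : ℕ) + 1 = i at this
    omega
  have h1 := (key v hv).comp (Fin.rev_strictAnti (n := m + 1))
  have h2 := (key w hw).comp (Fin.rev_strictAnti (n := m + 1))
  have h3 : ⇑v⁻¹ ∘ Fin.rev = ⇑w⁻¹ ∘ Fin.rev := by
    apply (StrictMono.range_inj h1 h2).1
    rw [(v⁻¹.surjective.comp Fin.rev_surjective).range_eq,
      (w⁻¹.surjective.comp Fin.rev_surjective).range_eq]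
  apply inv_injective
  ext k
  have := congrFun h3 (Fin.rev k)
  simp only [Function.comp, Fin.rev_rev] at this
  rw [this]

end HeckeLikeTower

/-- assume `{T_w : w ∈ S_n}` is a basis of `B_n`, let `w₀` be the longest
element of `S_n` and let `λ : B_n → F` be the linear functional with `λ(T_w) = δ_{w,w₀}`.
Then every nonzero left ideal of `B_n` contains an element `b` with `λ(b) ≠ 0`, i.e.
`ker λ` contains no nonzero left ideal, so `B_n` is Frobenius with trace map `λ`. -/
theorem heckeLike_frobenius (F : Type*) [Field F] (c d : F) (n : ℕ) (hn : 0 < n)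
    (word : Equiv.Perm (Fin n) → List (Fin (n - 1)))
    (hword : ∀ w, IsReducedWord n w (word w))
    (hindep : LinearIndependent F (fun w : Equiv.Perm (Fin n) => Tword F c d n (word w)))
    (hspan : Submodule.span F
      (Set.range (fun w : Equiv.Perm (Fin n) => Tword F c d n (word w))) = ⊤)
    (w₀ : Equiv.Perm (Fin n)) (hw₀ : ∀ w, len n w ≤ len n w₀)
    (lam : B F c d n →ₗ[F] F)
    (hlam : ∀ w : Equiv.Perm (Fin n),
      lam (Tword F c d n (word w)) = if w = w₀ then 1 else 0) :
    ∀ I : Submodule (B F c d n) (B F c d n), I ≠ ⊥ → ∃ b ∈ I, lam b ≠ 0 := by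
  classical
  intro I hI
  have hred : ∀ w, rho F c d n (Tword F c d n (word w)) (Pi.single 1 1) = Pi.single w 1 := by
    intro w
    have h := rho_reduced F c d n (word w) (by
      rw [(hword w).1]; exact hword w)
    rwa [(hword w).1] at h
  have hasc : ∀ i w, Asc n i w → len n w < len n (s n i * w) := fun i w h =>
    len_lt_of_asc n i w _ (hword _) h
  have hl : lam = (LinearMap.proj w₀ ∘ₗ LinearMap.applyₗ (Pi.single 1 1)) ∘ₗ
      (rho F c d n).toLinearMap := by
    apply LinearMap.ext_on_range hspan
    intro w
    rw [hlam]
    simp [hred, Pi.single_apply, eq_comm]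
  have hl' : ∀ b, lam b = rho F c d n b (Pi.single 1 1) w₀ := by
    intro b; rw [hl]; simp
  obtain ⟨x, hxI, hx0⟩ := Submodule.exists_mem_ne_zero_of_ne_bot hI
  have hne : {w | ∃ y ∈ I, rho F c d n y (Pi.single 1 1) w ≠ 0}.Nonempty := by
    by_contra hemp
    apply hx0
    have hxs : x ∈ Submodule.span F
      (Set.range (fun w : Equiv.Perm (Fin n) => Tword F c d n (word w))) := by
      rw [hspan]; trivial
    obtain ⟨a, ha⟩ := (Submodule.mem_span_range_iff_exists_fun F).1 hxs
    have ha0 : ∀ w, a w = 0 := by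
      intro w
      by_contra haw
      apply hemp
      refine ⟨w, x, hxI, ?_⟩
      rw [← ha]
      simpa [hred, Pi.single_apply] using haw
    rw [← ha]
    simp [ha0]
  obtain ⟨w, ⟨y, hyI, hy⟩, hmax⟩ := Set.exists_max_image _ (len n) (Set.toFinite _) hne
  refine ⟨y, hyI, ?_⟩
  have hww : w₀ = w := by
    apply eq_of_no_asc n hn
    · intro i hi
      exact absurd (hw₀ (s n i * w₀)) (not_le.2 (hasc i _ hi))
    · intro i hi
      have hlt := hasc i _ hi
      have hz : rho F c d n y (Pi.single 1 1) (s n i * w) = 0 := by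
        by_contra hz
        exact absurd (hmax _ ⟨y, hyI, hz⟩) (not_le.2 hlt)
      refine absurd (hmax (s n i * w) ⟨T F c d n i * y, I.smul_mem _ hyI, ?_⟩) (not_le.2 hlt)
      rw [map_mul, Module.End.mul_apply, rho_T, L_neg _ _ _ _ _ _ _ (fun h => (asc_s_mul n i w).1 h hi),
        s_mul_cancel, hz]
      simpa using hy
  rw [hl', hww]
  exact hy
end
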